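/- Let f be a quadratic form over K = GF(q²) whose zero set in PG(2,q²) is an F_{q²}-conic 𝒪. (i) If 𝒪 is tangent to ℓ∞ at the point P̄, then [𝒪] ∩ Σ∞ = [P] and in PG(4,q²), [𝒪]⋆ ∩ {z = 0} = [P]⋆. (ii) If 𝒪 ∩ ℓ∞ = ∅, then [𝒪] ∩ Σ∞ = ∅, in PG(4,q²) [𝒪]⋆ ∩ {z = 0} = ∅, and in PG(4,q⁴) the set [𝒪]✶ ∩ {z = 0} equals ℓ_P ∪ ℓ_P^q ∪ ℓ_P^{q²} ∪ ℓ_P^{q³}, where P = αA₀ + A₁ for a point (α,1,0), α ∈ GF(q⁴), lying on the zero set of f over GF(q⁴), and ℓ_P is the line of PG(4,q⁴) through P and P^q (conjugation x ↦ x^q acting coordinatewise). -/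

import Mathlib

open scoped Classical
open Matrix

noncomputable section

namespace BaerConics

/-- Points of the projective space `PG(n-1, K)` as projectivization of `Fin n → K`. -/
abbrev PP (K : Type) [Field K] (n : ℕ) : Type := Projectivization K (Fin n → K)

variable {K : Type} [Field K] {m n : ℕ}

/-- The (at most one) projective point determined by a vector:  empty if `v = 0`,
and the singleton `{[v]}` otherwise. -/
def projPt (v : Fin n → K) : Set (PP K n) :=
  {p | ∃ h : v ≠ 0, p = Projectivization.mk K v h}

/-- The set of projective points lying in a linear subspace. -/
def ptsOf (W : Submodule K (Fin n → K)) : Set (PP K n) :=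
  {p | p.rep ∈ W}

/-- The projective line through two points (as the set of points of the span). -/
def lineTh (P Q : PP K n) : Set (PP K n) :=
  ptsOf (Submodule.span K {P.rep, Q.rep})

/-- `X` is a projective flat of projective dimension `d`. -/
def IsFlat (d : ℕ) (X : Set (PP K n)) : Prop :=
  ∃ W : Submodule K (Fin n → K), Module.finrank K W = d + 1 ∧ X = ptsOf W

/-- Image of a set of vectors under the projective map induced by a matrix. -/
def mimg (M : Matrix (Fin m) (Fin n) K) (X : Set (Fin n → K)) : Set (PP K m) :=
  {p | ∃ v ∈ X, p ∈ projPt (M.mulVec v)}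

/-- Coordinatewise application of a ring homomorphism to a vector. -/
def mapVec {L : Type} [Field L] (σ : K →+* L) (v : Fin n → K) : Fin n → L :=
  fun i => σ (v i)

lemma mulVec_inj (M : Matrix (Fin n) (Fin n) K) (hM : IsUnit M.det) :
    Function.Injective M.mulVec := by
  intro a b hab
  have h := congrArg (fun v => M⁻¹.mulVec v) hab
  simpa [Matrix.mulVec_mulVec, Matrix.nonsing_inv_mul M hM] using h

/-- The projective transformation induced by an invertible matrix. -/
def pmap (M : Matrix (Fin n) (Fin n) K) (hM : IsUnit M.det) (p : PP K n) : PP K n :=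
  Projectivization.mk K (M.mulVec p.rep) (by
    intro h
    apply p.rep_nonzero
    have h0 : M.mulVec p.rep = M.mulVec 0 := by simpa [Matrix.mulVec_zero] using h
    exact mulVec_inj M hM h0)

/-- The map induced on projective points by the coordinatewise `q`-power map. -/
def frobPt (q : ℕ) (p : PP K n) : PP K n :=
  Projectivization.mk K (fun i => p.rep i ^ q) (by
    obtain ⟨i, hi⟩ := Function.ne_iff.mp p.rep_nonzero
    intro h
    exact pow_ne_zero q (by simpa using hi) (by simpa using congrFun h i))

/-- The line at infinity `z = 0` of `PG(2, K)`. -/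
def linf (K : Type) [Field K] : Set (PP K 3) := {p | p.rep 2 = 0}

/-- Coordinatewise application of the algebra map to a vector. -/
def algVec (F : Type) {K : Type} [Field F] [Field K] [Algebra F K] {n : ℕ}
    (v : Fin n → F) : Fin n → K := fun i => algebraMap F K (v i)

/-- Vectors representing the points of the standard Baer subline of `ℓ∞`. -/
def sublineVecs (F K : Type) [Field F] [Field K] [Algebra F K] : Set (Fin 3 → K) :=
  {v | ∃ θ : F, v = ![algebraMap F K θ, 1, 0]} ∪ {![1, 0, 0]}

/-- Nonzero vectors representing the points of `ℓ∞`. -/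
def linfVecs (K : Type) [Field K] : Set (Fin 3 → K) := {v | v ≠ 0 ∧ v 2 = 0}

/-- Vectors with all coordinates in (the image of) `F`, representing the canonical
Baer subplane. -/
def subplaneVecs (F K : Type) [Field F] [Field K] [Algebra F K] : Set (Fin 3 → K) :=
  {v | ∃ w : Fin 3 → F, w ≠ 0 ∧ v = algVec F w}

/-- Vectors of the standard conic with parameters in `S`. -/
def conicVecs {K : Type} [Field K] (S : Set K) : Set (Fin 3 → K) :=
  {v | ∃ θ ∈ S, v = ![1, θ, θ ^ 2]} ∪ {![0, 0, 1]}

/-- `b` is a Baer subline of the line `ℓ` of `PG(2,q²)`. -/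
def IsBaerSublineOf (F : Type) {K : Type} [Field F] [Field K] [Algebra F K]
    (b ℓ : Set (PP K 3)) : Prop :=
  ∃ M : Matrix (Fin 3) (Fin 3) K, IsUnit M.det ∧
    ℓ = mimg M (linfVecs K) ∧ b = mimg M (sublineVecs F K)

/-- `B` is a Baer subplane of `PG(2,q²)`. -/
def IsBaerSubplane (F : Type) {K : Type} [Field F] [Field K] [Algebra F K]
    (B : Set (PP K 3)) : Prop :=
  ∃ M : Matrix (Fin 3) (Fin 3) K, IsUnit M.det ∧ B = mimg M (subplaneVecs F K)

/-- `C` is the image under `PGL(3,K)` of the standard conic with parameters in `S`. -/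
def IsConicOver {K : Type} [Field K] (S : Set K) (C : Set (PP K 3)) : Prop :=
  ∃ M : Matrix (Fin 3) (Fin 3) K, IsUnit M.det ∧ C = mimg M (conicVecs S)

/-- An `F_q`-conic of `PG(2,q²)`: a nondegenerate conic of a Baer subplane. -/
def IsFqConic (F : Type) {K : Type} [Field F] [Field K] [Algebra F K]
    (C : Set (PP K 3)) : Prop :=
  IsConicOver (Set.range (algebraMap F K)) C

/-- An `F_{q²}`-conic of `PG(2,q²)`: a nondegenerate conic. -/
def IsFq2Conic {K : Type} [Field K] (C : Set (PP K 3)) : Prop :=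
  IsConicOver (Set.univ : Set K) C

/-- `𝒦` is an `ℓ∞`-Baer pencil with vertex `P`. -/
def IsLinfBaerPencil (F : Type) {K : Type} [Field F] [Field K] [Algebra F K]
    (𝒦 : Set (PP K 3)) (P : PP K 3) : Prop :=
  P ∈ linf K ∧ ∃ ℓ b : Set (PP K 3), IsBaerSublineOf F b ℓ ∧ P ∉ ℓ ∧
    (∃! X, X ∈ b ∩ linf K) ∧ 𝒦 = ⋃ X ∈ b, lineTh P X

/-- `m` is a line of the Baer subplane `B`, with extension (full line) `ℓ`. -/
def IsLineOfExt {K : Type} [Field K] (q : ℕ) (B m ℓ : Set (PP K 3)) : Prop :=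
  IsFlat 1 ℓ ∧ m = B ∩ ℓ ∧ m.ncard = q + 1

/-- `m` is a line of the Baer subplane `B`. -/
def IsLineOf {K : Type} [Field K] (q : ℕ) (B m : Set (PP K 3)) : Prop :=
  ∃ ℓ, IsLineOfExt q B m ℓ

/-- `P` and `Q` are conjugate with respect to the Baer subline `b` of `ℓ∞`. -/
def ConjWrtSubline (F : Type) {K : Type} [Field F] [Field K] [Algebra F K]
    (q : ℕ) (b : Set (PP K 3)) (P Q : PP K 3) : Prop :=
  ∃ (M : Matrix (Fin 3) (Fin 3) K) (hM : IsUnit M.det),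
    mimg M (linfVecs K) = linf K ∧ b = mimg M (sublineVecs F K) ∧
    ∃ P₀ : PP K 3, P = pmap M hM P₀ ∧ Q = pmap M hM (frobPt q P₀)

/-- A representative vector for the point `(δ,1,0)` (resp. `(1,0,0)`) of `ℓ∞`. -/
def ptInfVec {K : Type} [Field K] : Option K → Fin 3 → K
  | some δ => ![δ, 1, 0]
  | none => ![1, 0, 0]

lemma ptInfVec_ne {K : Type} [Field K] (t : Option K) : ptInfVec t ≠ 0 := by
  cases t with
  | none => intro h; have h0 := congrFun h 0; simp [ptInfVec] at h0
  | some δ => intro h; have h0 := congrFun h 1; simp [ptInfVec] at h0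

/-- The point of `ℓ∞` with parameter `δ ∈ K ∪ {∞}`. -/
def ptInf {K : Type} [Field K] (t : Option K) : PP K 3 :=
  Projectivization.mk K (ptInfVec t) (ptInfVec_ne t)

/-- The hyperplane at infinity `z = 0` of `PG(4, F)`. -/
def sinf (F : Type) [Field F] : Set (PP F 5) := {p | p.rep 4 = 0}

/-- Affine coordinates of the Bruck-Bose image of an affine point of `PG(2,q²)`. -/
def bbVec {F K : Type} [Field F] [Field K] (c0 c1 : K → F) (p : PP K 3) : Fin 5 → F :=
  ![c0 (p.rep 0 / p.rep 2), c1 (p.rep 0 / p.rep 2),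
    c0 (p.rep 1 / p.rep 2), c1 (p.rep 1 / p.rep 2), 1]

/-- The Bruck-Bose map (meaningful on affine points of `PG(2,q²)`). -/
def bb {F K : Type} [Field F] [Field K] (c0 c1 : K → F) (p : PP K 3) : PP F 5 :=
  Projectivization.mk F (bbVec c0 c1 p) (by
    intro h
    have h4 := congrFun h 4
    simp [bbVec] at h4)

/-- First spanning vector of the spread line with parameter `δ ∈ K ∪ {∞}`. -/
def spreadV1 {F K : Type} [Field F] [Field K] (c0 c1 : K → F) : Option K → Fin 5 → F
  | some δ => ![c0 δ, c1 δ, 1, 0, 0]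
  | none => ![1, 0, 0, 0, 0]

/-- Second spanning vector of the spread line with parameter `δ ∈ K ∪ {∞}`. -/
def spreadV2 {F K : Type} [Field F] [Field K] (c0 c1 : K → F) (t0 t1 : F) :
    Option K → Fin 5 → F
  | some δ => ![t0 * c1 δ, c0 δ + t1 * c1 δ, 0, 1, 0]
  | none => ![0, 1, 0, 0, 0]

/-- The line of the regular spread `S` with parameter `δ ∈ K ∪ {∞}`. -/
def spreadLine {F K : Type} [Field F] [Field K] (c0 c1 : K → F) (t0 t1 : F)
    (t : Option K) : Set (PP F 5) :=
  ptsOf (Submodule.span F {spreadV1 c0 c1 t, spreadV2 c0 c1 t0 t1 t})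

/-- The extension `[T]⋆` of a spread line to `PG(4,q²)`. -/
def extSpreadLine (F : Type) {K : Type} [Field F] [Field K] [Algebra F K]
    (c0 c1 : K → F) (t0 t1 : F) (t : Option K) : Set (PP K 5) :=
  ptsOf (Submodule.span K
    {algVec F (spreadV1 c0 c1 t), algVec F (spreadV2 c0 c1 t0 t1 t)})

/-- The `K`-extension of an `F`-subspace. -/
def extSub (F : Type) {K : Type} [Field F] [Field K] [Algebra F K] {n : ℕ}
    (W : Submodule F (Fin n → F)) : Submodule K (Fin n → K) :=
  Submodule.span K (algVec F '' (W : Set (Fin n → F)))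

def A0v {K : Type} [Field K] (τ : K) (q : ℕ) : Fin 5 → K := ![τ ^ q, -1, 0, 0, 0]
def A1v {K : Type} [Field K] (τ : K) (q : ℕ) : Fin 5 → K := ![0, 0, τ ^ q, -1, 0]
def B0v {K : Type} [Field K] (τ : K) : Fin 5 → K := ![τ, -1, 0, 0, 0]
def B1v {K : Type} [Field K] (τ : K) : Fin 5 → K := ![0, 0, τ, -1, 0]

/-- The transversal line `g` of the regular spread, in `PG(4,q²)`. -/
def gline {K : Type} [Field K] (τ : K) (q : ℕ) : Set (PP K 5) :=
  ptsOf (Submodule.span K {A0v τ q, A1v τ q})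

/-- The conjugate transversal line `g^q` of the regular spread, in `PG(4,q²)`. -/
def gqline {K : Type} [Field K] (τ : K) : Set (PP K 5) :=
  ptsOf (Submodule.span K {B0v τ, B1v τ})

/-- Representative vector of the point `T = δA₀ + A₁` of `g`. -/
def gptVec {K : Type} [Field K] (τ : K) (q : ℕ) : Option K → Fin 5 → K
  | some δ => δ • A0v τ q + A1v τ q
  | none => A0v τ q

/-- Representative vector of the conjugate point `T^q = δ^q A₀^q + A₁^q` of `g^q`. -/
def gqptVec {K : Type} [Field K] (τ : K) (q : ℕ) : Option K → Fin 5 → K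
  | some δ => δ ^ q • B0v τ + B1v τ
  | none => B0v τ

lemma gptVec_ne {K : Type} [Field K] (τ : K) (q : ℕ) (t : Option K) :
    gptVec τ q t ≠ 0 := by
  cases t with
  | none =>
      intro h
      have := congrFun h 1
      simp [gptVec, A0v] at this
  | some δ =>
      intro h
      have := congrFun h 3
      simp [gptVec, A0v, A1v] at this

lemma gqptVec_ne {K : Type} [Field K] (τ : K) (q : ℕ) (t : Option K) :
    gqptVec τ q t ≠ 0 := by
  cases t with
  | none =>
      intro h
      have := congrFun h 1
      simp [gqptVec, B0v] at this
  | some δ =>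
      intro h
      have := congrFun h 3
      simp [gqptVec, B0v, B1v] at this

/-- The point of `g` corresponding to the point of `ℓ∞` with parameter `δ ∈ K ∪ {∞}`. -/
def gpt {K : Type} [Field K] (τ : K) (q : ℕ) (t : Option K) : PP K 5 :=
  Projectivization.mk K (gptVec τ q t) (gptVec_ne τ q t)

/-- The point of `g^q` conjugate to `gpt τ q t`. -/
def gqpt {K : Type} [Field K] (τ : K) (q : ℕ) (t : Option K) : PP K 5 :=
  Projectivization.mk K (gqptVec τ q t) (gqptVec_ne τ q t)

/-- Evaluation of the quadratic form with matrix `M` at `v`. -/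
def qeval {K : Type} [Field K] {n : ℕ} (M : Matrix (Fin n) (Fin n) K) (v : Fin n → K) : K :=
  v ⬝ᵥ M.mulVec v

/-- Vectors of the standard twisted cubic (inside the hyperplane `x₄ = 0`)
with parameters in `S`. -/
def tcVecs {K : Type} [Field K] (S : Set K) : Set (Fin 5 → K) :=
  {v | ∃ θ ∈ S, v = ![1, θ, θ ^ 2, θ ^ 3, 0]} ∪ {![0, 0, 0, 1, 0]}

/-- Vectors of the standard 4-dimensional normal rational curve with parameters in `S`. -/
def nrcVecs {K : Type} [Field K] (S : Set K) : Set (Fin 5 → K) :=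
  {v | ∃ θ ∈ S, v = ![1, θ, θ ^ 2, θ ^ 3, θ ^ 4]} ∪ {![0, 0, 0, 0, 1]}

/-- `R` is a regulus of `Σ∞` in `PG(4,q)`. -/
def IsRegulus {F : Type} [Field F] (q : ℕ) (R : Set (Set (PP F 5))) : Prop :=
  R.ncard = q + 1 ∧
  (∀ ℓ ∈ R, IsFlat 1 ℓ ∧ ℓ ⊆ sinf F) ∧
  (∀ ℓ ∈ R, ∀ ℓ' ∈ R, ℓ ≠ ℓ' → ℓ ∩ ℓ' = ∅) ∧
  (∀ mℓ : Set (PP F 5), IsFlat 1 mℓ → mℓ ⊆ sinf F →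
    (∃ ℓ₁ ∈ R, ∃ ℓ₂ ∈ R, ∃ ℓ₃ ∈ R, ℓ₁ ≠ ℓ₂ ∧ ℓ₁ ≠ ℓ₃ ∧ ℓ₂ ≠ ℓ₃ ∧
      (mℓ ∩ ℓ₁).Nonempty ∧ (mℓ ∩ ℓ₂).Nonempty ∧ (mℓ ∩ ℓ₃).Nonempty) →
    ∀ ℓ ∈ R, (mℓ ∩ ℓ).Nonempty)


/-- The Bruck-Bose substitution `(x₀,x₁,y₀,y₁,z) ↦ (x₀+x₁τ, y₀+y₁τ, z)`. -/
def bbSubst (F : Type) {K : Type} [Field F] [Field K] [Algebra F K] (τ : K)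
    (v : Fin 5 → F) : Fin 3 → K :=
  ![algebraMap F K (v 0) + algebraMap F K (v 1) * τ,
    algebraMap F K (v 2) + algebraMap F K (v 3) * τ,
    algebraMap F K (v 4)]

/-- The coordinatewise `q`-power map on vectors over `GF(q⁴)`. -/
def conjVecL {L : Type} [Field L] (qq : ℕ) (v : Fin 5 → L) : Fin 5 → L :=
  fun i => v i ^ qq

/-- The vector `αA₀ + A₁` (over `GF(q⁴)`) representing the transversal point `P`. -/
def pVec {K L : Type} [Field K] [Field L] [Algebra K L] (τ : K) (qq : ℕ) (α : L) :
    Fin 5 → L :=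
  α • mapVec (algebraMap K L) (A0v τ qq) + mapVec (algebraMap K L) (A1v τ qq)

/-- The line `ℓ_P^{q^k}` of `PG(4,q⁴)` joining `P^{q^k}` and `P^{q^{k+1}}`. -/
def lpLine {K L : Type} [Field K] [Field L] [Algebra K L] (τ : K) (qq : ℕ) (α : L)
    (k : ℕ) : Set (PP L 5) :=
  ptsOf (Submodule.span L
    {(conjVecL qq)^[k] (pVec τ qq α), (conjVecL qq)^[k + 1] (pVec τ qq α)})

/-!
Over any extension of `K` carrying a conjugation `σ` with `σ τ ≠ τ`, the equations `f∞ = f₀ = 0` are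
equivalent to `f∞ + τ f₀ = f∞ + τ^σ f₀ = 0`, and these two forms are `f(X, Y, z)` with
`X = x₀ + x₁τ`, `Y = y₀ + y₁τ`, and `f^σ(X', Y', z)` with `X' = x₀ + x₁τ^σ`, `Y' = y₀ + y₁τ^σ`.
So `[𝒪]` extends to the intersection of two quadric cones, which project `𝒪` and its conjugate from
the two transversal lines of the spread.

At infinity each cone degenerates. If `𝒪` is tangent to `ℓ∞`, then `f(x, y, 0)` is a square up to a
scalar, so each cone becomes a repeated plane, and the two planes meet in the extended spread
line. If `𝒪` is exterior, then `f(x, y, 0)` has no root over `K`, and over the extension it has the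
roots `α` and `α^{σ²}`, while `f^σ(x, y, 0)` has the roots `α^σ` and `α^{σ³}`. Each cone becomes two
planes, and the four intersections of a plane of the first cone with one of the second are the
lines joining consecutive conjugates of `αA₀ + A₁`.
-/

section FixedFields

variable {F K L : Type} [Field F] [Field K] [Field L] [Algebra F K] [Algebra K L] [Algebra F L]
  [IsScalarTower F K L] {τ : K} {t0 t1 : F} {σ : L →ₐ[F] L}

lemma mem_range_algebraMap_of_pow_card_eq [Fintype F] {x : L} (hx : x ^ Fintype.card F = x) :
    x ∈ Set.range (algebraMap F L) := by
  have hsplits := Polynomial.splits_X_pow_nat_card_sub_X (K := F)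
  rw [Nat.card_eq_fintype_card] at hsplits
  exact hsplits.mem_range_of_isRoot
    (FiniteField.X_pow_card_sub_X_ne_zero F Fintype.one_lt_card) (by simp [hx])

lemma map_algebraMap_ne_self (hσ : ∀ x, σ x = x → x ∈ Set.range (algebraMap F L))
    (hτF : τ ∉ Set.range (algebraMap F K)) : σ (algebraMap K L τ) ≠ algebraMap K L τ := by
  intro hfix
  obtain ⟨a, ha⟩ := hσ _ hfix
  rw [IsScalarTower.algebraMap_apply F K L] at ha
  exact hτF ⟨a, (algebraMap K L).injective ha⟩

lemma map_algebraMap_eq_sub (hτ : τ ^ 2 = algebraMap F K t1 * τ + algebraMap F K t0)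
    (hne : σ (algebraMap K L τ) ≠ algebraMap K L τ) :
    σ (algebraMap K L τ) = algebraMap K L (algebraMap F K t1 - τ) := by
  have hs := congrArg (algebraMap K L) hτ
  simp only [map_pow, map_add, map_mul, ← IsScalarTower.algebraMap_apply] at hs
  have hs' := congrArg σ hs
  simp only [map_pow, map_add, map_mul, AlgHom.commutes] at hs'
  rw [map_sub, ← IsScalarTower.algebraMap_apply]
  refine mul_left_cancel₀ (sub_ne_zero.mpr hne) ?_
  linear_combination hs' - hs

lemma exists_algebraMap_eq_map (hτ : τ ^ 2 = algebraMap F K t1 * τ + algebraMap F K t0)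
    (hne : σ (algebraMap K L τ) ≠ algebraMap K L τ)
    (hspan : ∀ x : K, ∃ a b : F, x = algebraMap F K a + algebraMap F K b * τ) (x : K) :
    ∃ y : K, algebraMap K L y = σ (algebraMap K L x) := by
  obtain ⟨a, b, rfl⟩ := hspan x
  refine ⟨algebraMap F K a + algebraMap F K b * (algebraMap F K t1 - τ), ?_⟩
  simp only [map_add, map_mul, map_algebraMap_eq_sub hτ hne, ← IsScalarTower.algebraMap_apply,
    AlgHom.commutes]

lemma exists_algHom_algebraMap_eq (hτ : τ ^ 2 = algebraMap F K t1 * τ + algebraMap F K t0)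
    (hne : σ (algebraMap K L τ) ≠ algebraMap K L τ)
    (hspan : ∀ x : K, ∃ a b : F, x = algebraMap F K a + algebraMap F K b * τ) :
    ∃ κ : K →ₐ[F] K, ∀ x, algebraMap K L (κ x) = σ (algebraMap K L x) := by
  choose κ hκ using exists_algebraMap_eq_map hτ hne hspan
  have hinj := (algebraMap K L).injective
  exact ⟨{ toFun := κ
           map_one' := hinj (by simp only [hκ, map_one])
           map_mul' := fun x y => hinj (by simp only [hκ, map_mul])
           map_zero' := hinj (by simp only [hκ, map_zero])
           map_add' := fun x y => hinj (by simp only [hκ, map_add])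
           commutes' := fun a => hinj (by
            rw [hκ, ← IsScalarTower.algebraMap_apply, AlgHom.commutes]) }, hκ⟩

lemma map_map_algebraMap (hτ : τ ^ 2 = algebraMap F K t1 * τ + algebraMap F K t0)
    (hne : σ (algebraMap K L τ) ≠ algebraMap K L τ)
    (hspan : ∀ x : K, ∃ a b : F, x = algebraMap F K a + algebraMap F K b * τ) (x : K) :
    σ (σ (algebraMap K L x)) = algebraMap K L x := by
  obtain ⟨a, b, rfl⟩ := hspan x
  have hτ' := map_algebraMap_eq_sub hτ hne
  simp only [map_add, map_mul, map_sub, ← IsScalarTower.algebraMap_apply, AlgHom.commutes,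
    hτ'] at hτ' ⊢
  ring

-- `y = (x - σ x) / (τ - σ τ)` and `x - y τ` are both fixed by `σ`.
lemma mem_range_algebraMap_of_map_map_eq
    (hσ : ∀ x, σ x = x → x ∈ Set.range (algebraMap F L))
    (hne : σ (algebraMap K L τ) ≠ algebraMap K L τ)
    (hττ : σ (σ (algebraMap K L τ)) = algebraMap K L τ) {x : L} (hx : σ (σ x) = x) :
    x ∈ Set.range (algebraMap K L) := by
  set s := algebraMap K L τ
  have hd : s - σ s ≠ 0 := sub_ne_zero.mpr hne.symm
  obtain ⟨b, hb⟩ := hσ ((x - σ x) / (s - σ s)) (by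
    rw [map_div₀, map_sub, map_sub, hx, hττ, ← neg_sub x, ← neg_sub s, neg_div_neg_eq])
  have hxb : x - σ x = algebraMap F L b * (s - σ s) := by rw [hb, div_mul_cancel₀ _ hd]
  obtain ⟨a, ha⟩ := hσ (x - algebraMap F L b * s) (by
    rw [map_sub, map_mul, AlgHom.commutes]
    linear_combination -hxb)
  refine ⟨algebraMap F K a + algebraMap F K b * τ, ?_⟩
  rw [map_add, map_mul, ← IsScalarTower.algebraMap_apply, ← IsScalarTower.algebraMap_apply, ha]
  ring

end FixedFields

section QuadraticForms

variable {A B G : Type} [Field A] [Field B] [FunLike G A B] [RingHomClass G A B]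

lemma qeval_eq_sum (N : Matrix (Fin n) (Fin n) A) (v : Fin n → A) :
    qeval N v = ∑ ij : Fin n × Fin n, N ij.1 ij.2 * (v ij.1 * v ij.2) := by
  simp only [qeval, dotProduct, mulVec, Finset.mul_sum, Fintype.sum_prod_type]
  exact Finset.sum_congr rfl fun i _ => Finset.sum_congr rfl fun j _ => by ring

lemma map_qeval (φ : G) (N : Matrix (Fin n) (Fin n) A) (v : Fin n → A) :
    φ (qeval N v) = qeval (N.map φ) (φ ∘ v) := by
  simp only [qeval_eq_sum, map_sum, map_mul, Matrix.map_apply, Function.comp_apply]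

lemma qeval_smul (N : Matrix (Fin n) (Fin n) A) (r : A) (v : Fin n → A) :
    qeval N (r • v) = r ^ 2 * qeval N v := by
  simp only [qeval, mulVec_smul, smul_dotProduct, dotProduct_smul, smul_eq_mul]
  ring

lemma qeval_add_smul (N N' : Matrix (Fin n) (Fin n) A) (r : A) (v : Fin n → A) :
    qeval (N + r • N') v = qeval N v + r * qeval N' v := by
  simp only [qeval, add_mulVec, smul_mulVec, dotProduct_add, dotProduct_smul, smul_eq_mul]

lemma qeval_transpose_mul_mul (N : Matrix (Fin m) (Fin m) A) (T : Matrix (Fin m) (Fin n) A)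
    (v : Fin n → A) : qeval (Tᵀ * N * T) v = qeval N (T *ᵥ v) := by
  simp only [qeval, ← mulVec_mulVec, dotProduct_mulVec, vecMul_transpose]

lemma qeval_eq_zero_of_alternating {N : Matrix (Fin n) (Fin n) A} (hdiag : ∀ i, N i i = 0)
    (hskew : ∀ i j, N i j + N j i = 0) (v : Fin n → A) : qeval N v = 0 := by
  rw [qeval_eq_sum]
  refine Finset.sum_involution (fun ij _ => ij.swap) (fun ij _ => ?_) (fun ij _ hij hswap => ?_)
    (fun _ _ => Finset.mem_univ _) (fun _ _ => Prod.swap_swap _)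
  · simp only [Prod.fst_swap, Prod.snd_swap]
    linear_combination (v ij.1 * v ij.2) * hskew ij.1 ij.2
  · have hdiagonal : ij.2 = ij.1 := congrArg Prod.fst hswap
    exact hij (by rw [hdiagonal, hdiag, zero_mul])

lemma qeval_single (N : Matrix (Fin n) (Fin n) A) (i : Fin n) :
    qeval N (Pi.single i 1) = N i i := by
  simp [qeval]

lemma qeval_single_add_single (N : Matrix (Fin n) (Fin n) A) (i j : Fin n) :
    qeval N (Pi.single i 1 + Pi.single j 1) = N i i + N j j + (N i j + N j i) := by
  simp only [qeval, mulVec_add, mulVec_single_one, dotProduct_add, add_dotProduct,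
    single_one_dotProduct, col_apply]
  ring

-- The values at `e i` and `e i + e j`, which are rational over every subfield, determine the form.
lemma qeval_map_eq_of_forall_algVec {F : Type} [Field F] [Algebra F A]
    {N N' : Matrix (Fin n) (Fin n) A}
    (h : ∀ w : Fin n → F, qeval N (algVec F w) = qeval N' (algVec F w)) (φ : G)
    (v : Fin n → B) : qeval (N.map φ) v = qeval (N'.map φ) v := by
  have hsingle (i : Fin n) : algVec F (Pi.single i 1) = (Pi.single i 1 : Fin n → A) := by
    ext j
    simp [algVec, Pi.single_apply, apply_ite (algebraMap F A)]
  have hdiag (i : Fin n) : N i i = N' i i := by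
    simpa only [hsingle, qeval_single] using h (Pi.single i 1)
  have hpolar (i j : Fin n) : N i j + N j i = N' i j + N' j i := by
    have hadd : algVec F (Pi.single i 1 + Pi.single j 1) =
        (Pi.single i 1 + Pi.single j 1 : Fin n → A) := by
      rw [← hsingle, ← hsingle]
      exact funext fun _ => map_add _ _ _
    have hij := h (Pi.single i 1 + Pi.single j 1)
    rw [hadd, qeval_single_add_single, qeval_single_add_single, hdiag, hdiag] at hij
    exact add_left_cancel hij
  have hdiff : qeval (N.map φ + (-1 : B) • N'.map φ) v = 0 := by
    refine qeval_eq_zero_of_alternating (fun i => ?_) (fun i j => ?_) v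
    · simp [hdiag]
    · have hij := congrArg φ (hpolar i j)
      simp only [map_add] at hij
      simp only [Matrix.add_apply, Matrix.smul_apply, Matrix.map_apply, smul_eq_mul]
      linear_combination hij
  rw [qeval_add_smul] at hdiff
  linear_combination hdiff

lemma qeval_cons_cons_zero (N : Matrix (Fin 3) (Fin 3) A) (x y : A) :
    qeval N ![x, y, 0] = N 0 0 * x ^ 2 + (N 0 1 + N 1 0) * (x * y) + N 1 1 * y ^ 2 := by
  simp only [qeval, dotProduct, mulVec, Fin.sum_univ_three, Matrix.cons_val]
  ring

lemma map_qeval_cons_cons_zero (φ : G) (N : Matrix (Fin 3) (Fin 3) A) (x y : A) :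
    φ (qeval N ![x, y, 0]) = qeval (N.map φ) ![φ x, φ y, 0] := by
  simp only [qeval_cons_cons_zero, Matrix.map_apply, map_add, map_mul, map_pow]

lemma qeval_cons_cons_zero_eq_zero_iff {N : Matrix (Fin 3) (Fin 3) A} (h00 : N 0 0 ≠ 0) {α β : A}
    (hne : α ≠ β) (hα : qeval N ![α, 1, 0] = 0) (hβ : qeval N ![β, 1, 0] = 0) (x y : A) :
    qeval N ![x, y, 0] = 0 ↔ x = α * y ∨ x = β * y := by
  rw [qeval_cons_cons_zero] at hα hβ
  have hsum : N 0 0 * (α + β) + (N 0 1 + N 1 0) = 0 :=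
    mul_left_cancel₀ (sub_ne_zero.mpr hne) (by linear_combination hα - hβ)
  have hfactor : qeval N ![x, y, 0] = N 0 0 * ((x - α * y) * (x - β * y)) := by
    rw [qeval_cons_cons_zero]
    linear_combination (x * y - α * y ^ 2) * hsum + y ^ 2 * hα
  simp only [hfactor, mul_eq_zero, h00, false_or, sub_eq_zero]

end QuadraticForms

section PointsAtInfinity

variable {A B G : Type} [Field A] [Field B] [FunLike G A B] [RingHomClass G A B]
  {M : Matrix (Fin 3) (Fin 3) A}

lemma mk_mem_inter_linf_iff {v : Fin 3 → A} (hv : v ≠ 0) :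
    Projectivization.mk A v hv ∈ {p : PP A 3 | qeval M p.rep = 0} ∩ linf A ↔
      qeval M v = 0 ∧ v 2 = 0 := by
  obtain ⟨r, hr⟩ := Projectivization.exists_smul_eq_mk_rep A v hv
  simp only [Set.mem_inter_iff, Set.mem_ofPred_eq, linf, ← hr, Units.smul_def, qeval_smul,
    Pi.smul_apply, smul_eq_mul, mul_eq_zero, pow_eq_zero_iff two_ne_zero, r.ne_zero, false_or]

lemma cons_cons_zero_ne_zero_iff {x y : A} : (![x, y, 0] : Fin 3 → A) ≠ 0 ↔ x ≠ 0 ∨ y ≠ 0 := by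
  simp only [ne_eq, Matrix.cons_eq_zero_iff, Matrix.zero_empty, and_true]
  tauto

lemma eq_zero_of_inter_linf_eq_empty (hM : {p : PP A 3 | qeval M p.rep = 0} ∩ linf A = ∅)
    {x y : A} (hxy : qeval M ![x, y, 0] = 0) : x = 0 ∧ y = 0 := by
  by_contra! hne
  have hv : (![x, y, 0] : Fin 3 → A) ≠ 0 :=
    cons_cons_zero_ne_zero_iff.mpr (or_iff_not_imp_left.mpr fun h => hne (not_not.mp h))
  exact Set.eq_empty_iff_forall_notMem.mp hM _ ((mk_mem_inter_linf_iff hv).mpr ⟨hxy, rfl⟩)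

lemma apply_zero_zero_ne_zero_of_inter_linf_eq_empty
    (hM : {p : PP A 3 | qeval M p.rep = 0} ∩ linf A = ∅) : M 0 0 ≠ 0 := by
  intro h00
  have hroot : qeval M ![1, 0, 0] = 0 := by rw [qeval_cons_cons_zero, h00]; ring
  exact one_ne_zero (eq_zero_of_inter_linf_eq_empty hM hroot).1

lemma exists_smul_ptInfVec_eq_iff (t : Option A) (x y : A) :
    (∃ a : A, a • ptInfVec t = ![x, y, 0]) ↔ x * ptInfVec t 1 = y * ptInfVec t 0 := by
  cases t with
  | none => simp [ptInfVec, eq_comm]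
  | some δ => simp [ptInfVec, eq_comm]

lemma qeval_cons_cons_zero_eq_zero_iff_of_inter_linf_eq_singleton {t : Option A}
    (hM : {p : PP A 3 | qeval M p.rep = 0} ∩ linf A = {ptInf t}) (x y : A) :
    qeval M ![x, y, 0] = 0 ↔ x * ptInfVec t 1 = y * ptInfVec t 0 := by
  by_cases hv : (![x, y, 0] : Fin 3 → A) = 0
  · obtain ⟨rfl, rfl⟩ : x = 0 ∧ y = 0 := by simpa using hv
    simp [qeval_cons_cons_zero]
  · rw [← exists_smul_ptInfVec_eq_iff, ← Projectivization.mk_eq_mk_iff' A _ _ hv (ptInfVec_ne t),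
      ← ptInf, ← Set.mem_singleton_iff (b := ptInf t), ← hM, mk_mem_inter_linf_iff]
    simp

-- A binary quadratic form with a single root is a square, up to a scalar: the second root that
-- Vieta's formulas produce from the first must coincide with it.
lemma exists_coeff_eq_of_inter_linf_eq_singleton {t : Option A}
    (hM : {p : PP A 3 | qeval M p.rep = 0} ∩ linf A = {ptInf t}) :
    ∃ e ≠ 0, M 0 0 = e * ptInfVec t 1 ^ 2 ∧
      M 0 1 + M 1 0 = -(2 * e * ptInfVec t 0 * ptInfVec t 1) ∧ M 1 1 = e * ptInfVec t 0 ^ 2 := by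
  have hroot := qeval_cons_cons_zero_eq_zero_iff_of_inter_linf_eq_singleton hM
  simp only [qeval_cons_cons_zero] at hroot
  cases t with
  | none =>
    simp only [ptInfVec, Matrix.cons_val_zero, Matrix.cons_val_one, mul_zero, mul_one] at hroot ⊢
    have h00 : M 0 0 = 0 := by simpa using hroot 1 0
    have h11 : M 1 1 ≠ 0 := by simpa using hroot 0 1
    have h01 : M 0 1 + M 1 0 = 0 := by
      have hvieta := (hroot (M 1 1) (-(M 0 1 + M 1 0))).mp (by rw [h00]; ring)
      exact neg_eq_zero.mp hvieta.symm
    exact ⟨M 1 1, h11, by simp [h00], by simp [h01], by simp⟩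
  | some δ =>
    simp only [ptInfVec, Matrix.cons_val_zero, Matrix.cons_val_one, mul_one] at hroot ⊢
    have h00 : M 0 0 ≠ 0 := by simpa using hroot 1 0
    have hδ := (hroot δ 1).mpr (one_mul δ).symm
    have hvieta := (hroot (M 0 0 * δ + (M 0 1 + M 1 0)) (-M 0 0)).mp
      (by linear_combination M 0 0 ^ 2 * hδ)
    exact ⟨M 0 0, h00, by ring, by linear_combination hvieta,
      by linear_combination hδ - δ * hvieta⟩

lemma qeval_map_cons_cons_zero_eq_zero_iff_of_inter_linf_eq_singleton {t : Option A}
    (hM : {p : PP A 3 | qeval M p.rep = 0} ∩ linf A = {ptInf t}) (φ : G) (x y : B) :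
    qeval (M.map φ) ![x, y, 0] = 0 ↔ x * φ (ptInfVec t 1) = y * φ (ptInfVec t 0) := by
  obtain ⟨e, he, h00, h01, h11⟩ := exists_coeff_eq_of_inter_linf_eq_singleton hM
  have hsquare : qeval (M.map φ) ![x, y, 0] =
      φ e * (x * φ (ptInfVec t 1) - y * φ (ptInfVec t 0)) ^ 2 := by
    simp only [qeval_cons_cons_zero, Matrix.map_apply, ← map_add, h00, h01, h11, map_neg, map_mul,
      map_pow, map_ofNat]
    ring
  rw [hsquare, mul_eq_zero, or_iff_right ((map_ne_zero φ).mpr he),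
    pow_eq_zero_iff two_ne_zero, sub_eq_zero]

end PointsAtInfinity

section BruckBose

variable {F K E : Type} [Field F] [Field K] [Field E] [Algebra F K] [Algebra F E]
  {τ : K} {M : Matrix (Fin 3) (Fin 3) K} {Minf M0 : Matrix (Fin 5) (Fin 5) F}

/-- The linear map `(x₀,x₁,y₀,y₁,z) ↦ (x₀+x₁s, y₀+y₁s, z)`. For `s = τ` it extends the Bruck–Bose
substitution to field extensions, where it is the projection from a transversal line of the
spread. -/
def bbMatrix (s : E) : Matrix (Fin 3) (Fin 5) E :=
  !![1, s, 0, 0, 0; 0, 0, 1, s, 0; 0, 0, 0, 0, 1]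

lemma bbMatrix_mulVec (s : E) (v : Fin 5 → E) :
    bbMatrix s *ᵥ v = ![v 0 + v 1 * s, v 2 + v 3 * s, v 4] := by
  ext i
  fin_cases i <;> simp [bbMatrix, mulVec, dotProduct, Fin.sum_univ_five, mul_comm]

lemma bbSubst_eq_mulVec (τ : K) (w : Fin 5 → F) :
    bbSubst F τ w = bbMatrix τ *ᵥ algVec F w := by
  rw [bbMatrix_mulVec]
  rfl

lemma bbMatrix_map (φ : K →ₐ[F] E) (s : K) : (bbMatrix s).map φ = bbMatrix (φ s) := by
  ext i j
  fin_cases i <;> fin_cases j <;> simp [bbMatrix]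

/-- The decomposition `f = f∞ + τ f₀` of a quadratic form `f` over `K`, with matrix `M`, into
quadratic forms `f∞` and `f₀` over `F`, with matrices `Minf` and `M0`, under the Bruck–Bose
substitution. -/
def IsBBDecomposition (τ : K) (M : Matrix (Fin 3) (Fin 3) K)
    (Minf M0 : Matrix (Fin 5) (Fin 5) F) : Prop :=
  ∀ w : Fin 5 → F, qeval M (bbSubst F τ w) =
    algebraMap F K (qeval Minf w) + algebraMap F K (qeval M0 w) * τ

lemma qeval_map_algebraMap_algVec (N : Matrix (Fin n) (Fin n) F) (w : Fin n → F) :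
    qeval (N.map (algebraMap F E)) (algVec F w) = algebraMap F E (qeval N w) :=
  (map_qeval (algebraMap F E) N w).symm

lemma IsBBDecomposition.qeval_add_mul_qeval (h : IsBBDecomposition τ M Minf M0) (φ : K →ₐ[F] E)
    (v : Fin 5 → E) :
    qeval (Minf.map (algebraMap F E)) v + φ τ * qeval (M0.map (algebraMap F E)) v =
      qeval (M.map φ) (bbMatrix (φ τ) *ᵥ v) := by
  have hrational (w : Fin 5 → F) :
      qeval (Minf.map (algebraMap F K) + τ • M0.map (algebraMap F K)) (algVec F w) =
        qeval ((bbMatrix τ)ᵀ * M * bbMatrix τ) (algVec F w) := by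
    rw [qeval_add_smul, qeval_map_algebraMap_algVec, qeval_map_algebraMap_algVec,
      qeval_transpose_mul_mul, ← bbSubst_eq_mulVec, h, mul_comm τ]
  have hleft : (Minf.map (algebraMap F K) + τ • M0.map (algebraMap F K)).map φ =
      Minf.map (algebraMap F E) + φ τ • M0.map (algebraMap F E) := by
    ext i j
    simp
  have hright : ((bbMatrix τ)ᵀ * M * bbMatrix τ).map φ =
      (bbMatrix (φ τ))ᵀ * M.map φ * bbMatrix (φ τ) := by
    rw [Matrix.map_mul, Matrix.map_mul, Matrix.transpose_map, bbMatrix_map]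
  rw [← qeval_add_smul, ← hleft, qeval_map_eq_of_forall_algVec hrational φ v, hright,
    qeval_transpose_mul_mul]

lemma eq_zero_and_eq_zero_iff_add_mul_eq_zero {x y s s' : E} (hs : s ≠ s') :
    x = 0 ∧ y = 0 ↔ x + s * y = 0 ∧ x + s' * y = 0 := by
  constructor
  · rintro ⟨rfl, rfl⟩
    simp
  · rintro ⟨h, h'⟩
    have hy : y = 0 := mul_left_cancel₀ (sub_ne_zero.mpr hs) (by linear_combination h - h')
    exact ⟨by simpa [hy] using h, hy⟩

lemma IsBBDecomposition.qeval_eq_zero_iff (h : IsBBDecomposition τ M Minf M0) {φ φ' : K →ₐ[F] E}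
    (hne : φ τ ≠ φ' τ) {v : Fin 5 → E} (hv : v 4 = 0) :
    qeval (Minf.map (algebraMap F E)) v = 0 ∧ qeval (M0.map (algebraMap F E)) v = 0 ↔
      qeval (M.map φ) ![v 0 + v 1 * φ τ, v 2 + v 3 * φ τ, 0] = 0 ∧
        qeval (M.map φ') ![v 0 + v 1 * φ' τ, v 2 + v 3 * φ' τ, 0] = 0 := by
  rw [eq_zero_and_eq_zero_iff_add_mul_eq_zero hne, h.qeval_add_mul_qeval, h.qeval_add_mul_qeval,
    bbMatrix_mulVec, bbMatrix_mulVec, hv]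

end BruckBose

section SpreadLines

variable {F K E : Type} [Field F] [Field K] [Field E] [Algebra F K] [Algebra F E] [Algebra E K]
  [IsScalarTower F E K] {τ : K} {t0 t1 : F} {c0 c1 : K → F} {κ : K →ₐ[F] K}
  {M : Matrix (Fin 3) (Fin 3) K} {Minf M0 : Matrix (Fin 5) (Fin 5) F}

lemma mem_span_spread_some_iff (d0 d1 s0 s1 : E) (v : Fin 5 → E) :
    v ∈ Submodule.span E {![d0, d1, 1, 0, 0], ![s0 * d1, d0 + s1 * d1, 0, 1, 0]} ↔
      v 4 = 0 ∧ v 0 - (d0 * v 2 + s0 * d1 * v 3) = 0 ∧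
        v 1 - (d1 * v 2 + (d0 + s1 * d1) * v 3) = 0 := by
  rw [Submodule.mem_span_pair]
  constructor
  · rintro ⟨a, b, rfl⟩
    simp only [Pi.add_apply, Pi.smul_apply, smul_eq_mul, Matrix.cons_val]
    exact ⟨by ring, by ring, by ring⟩
  · rintro ⟨h4, h0, h1⟩
    have hv0 : v 2 * d0 + v 3 * (s0 * d1) = v 0 := by linear_combination -h0
    have hv1 : v 2 * d1 + v 3 * (d0 + s1 * d1) = v 1 := by linear_combination -h1
    refine ⟨v 2, v 3, funext fun i => ?_⟩
    fin_cases i <;> simp [hv0, hv1, h4]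

lemma mem_span_spread_none_iff (v : Fin 5 → E) :
    v ∈ Submodule.span E {![1, 0, 0, 0, 0], ![0, 1, 0, 0, 0]} ↔
      v 4 = 0 ∧ v 2 = 0 ∧ v 3 = 0 := by
  rw [Submodule.mem_span_pair]
  constructor
  · rintro ⟨a, b, rfl⟩
    simp
  · rintro ⟨h4, h2, h3⟩
    refine ⟨v 0, v 1, funext fun i => ?_⟩
    fin_cases i <;> simp [h4, h2, h3]

lemma add_mul_spread_some_eq (hτ : τ ^ 2 = algebraMap F K t1 * τ + algebraMap F K t0)
    (hc : ∀ x : K, x = algebraMap F K (c0 x) + algebraMap F K (c1 x) * τ) (φ : K →ₐ[F] K) (δ : K)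
    (v : Fin 5 → E) :
    algebraMap E K (v 0 - (algebraMap F E (c0 δ) * v 2 +
        algebraMap F E t0 * algebraMap F E (c1 δ) * v 3)) +
      φ τ * algebraMap E K (v 1 - (algebraMap F E (c1 δ) * v 2 +
        (algebraMap F E (c0 δ) + algebraMap F E t1 * algebraMap F E (c1 δ)) * v 3)) =
    algebraMap E K (v 0) + algebraMap E K (v 1) * φ τ -
      (algebraMap E K (v 2) + algebraMap E K (v 3) * φ τ) * φ δ := by
  have hδ := congrArg φ (hc δ)
  have hφτ := congrArg φ hτ
  simp only [map_add, map_sub, map_mul, map_pow, AlgHom.commutes,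
    ← IsScalarTower.algebraMap_apply] at hδ hφτ ⊢
  linear_combination (algebraMap E K (v 2) + algebraMap E K (v 3) * φ τ) * hδ +
    algebraMap F K (c1 δ) * algebraMap E K (v 3) * hφτ

-- The extension of the spread line `[T]` is cut out of `z = 0` by the plane projecting `T̄` from
-- one transversal line and the plane projecting its conjugate from the other.
lemma mem_span_spread_iff (hτ : τ ^ 2 = algebraMap F K t1 * τ + algebraMap F K t0)
    (hc : ∀ x : K, x = algebraMap F K (c0 x) + algebraMap F K (c1 x) * τ) (hκ : κ τ ≠ τ)
    (t : Option K) (v : Fin 5 → E) :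
    v ∈ Submodule.span E {algVec F (spreadV1 c0 c1 t), algVec F (spreadV2 c0 c1 t0 t1 t)} ↔
      v 4 = 0 ∧
      ((algebraMap E K (v 0) + algebraMap E K (v 1) * τ) * ptInfVec t 1 =
        (algebraMap E K (v 2) + algebraMap E K (v 3) * τ) * ptInfVec t 0 ∧
      (algebraMap E K (v 0) + algebraMap E K (v 1) * κ τ) * κ (ptInfVec t 1) =
        (algebraMap E K (v 2) + algebraMap E K (v 3) * κ τ) * κ (ptInfVec t 0)) := by
  have hinj (x : E) : x = 0 ↔ algebraMap E K x = 0 := (map_eq_zero (algebraMap E K)).symm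
  cases t with
  | none =>
    have h1 : algVec F (spreadV1 c0 c1 none) = (![1, 0, 0, 0, 0] : Fin 5 → E) := by
      simp [algVec, spreadV1, funext_iff, Fin.forall_fin_succ]
    have h2 : algVec F (spreadV2 c0 c1 t0 t1 none) = (![0, 1, 0, 0, 0] : Fin 5 → E) := by
      simp [algVec, spreadV2, funext_iff, Fin.forall_fin_succ]
    rw [h1, h2, mem_span_spread_none_iff, hinj (v 2), hinj (v 3),
      eq_zero_and_eq_zero_iff_add_mul_eq_zero hκ.symm]
    simp [ptInfVec, mul_comm, eq_comm]
  | some δ =>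
    have h1 : algVec F (spreadV1 c0 c1 (some δ)) =
        (![algebraMap F E (c0 δ), algebraMap F E (c1 δ), 1, 0, 0] : Fin 5 → E) := by
      simp [algVec, spreadV1, funext_iff, Fin.forall_fin_succ]
    have h2 : algVec F (spreadV2 c0 c1 t0 t1 (some δ)) =
        (![algebraMap F E t0 * algebraMap F E (c1 δ),
          algebraMap F E (c0 δ) + algebraMap F E t1 * algebraMap F E (c1 δ), 0, 1, 0] :
            Fin 5 → E) := by
      simp [algVec, spreadV2, funext_iff, Fin.forall_fin_succ]
    rw [h1, h2, mem_span_spread_some_iff, hinj (_ - _), hinj (v 1 - _),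
      eq_zero_and_eq_zero_iff_add_mul_eq_zero hκ.symm, add_mul_spread_some_eq hτ hc κ,
      ← AlgHom.id_apply (R := F) τ, add_mul_spread_some_eq hτ hc (AlgHom.id F K)]
    simp [ptInfVec, sub_eq_zero]

lemma qeval_map_algebraMap_eq_zero_iff (N : Matrix (Fin n) (Fin n) F) (v : Fin n → E) :
    qeval (N.map (algebraMap F E)) v = 0 ↔ qeval (N.map (algebraMap F K)) (algVec E v) = 0 := by
  rw [← map_eq_zero (algebraMap E K), map_qeval, Matrix.map_map, ← RingHom.coe_comp,
    ← IsScalarTower.algebraMap_eq]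
  rfl

theorem IsBBDecomposition.inter_sinf_eq_ptsOf (h : IsBBDecomposition τ M Minf M0)
    (hτ : τ ^ 2 = algebraMap F K t1 * τ + algebraMap F K t0)
    (hc : ∀ x : K, x = algebraMap F K (c0 x) + algebraMap F K (c1 x) * τ) (hκ : κ τ ≠ τ)
    {t : Option K} (hM : {p : PP K 3 | qeval M p.rep = 0} ∩ linf K = {ptInf t}) :
    {p : PP E 5 | qeval (Minf.map (algebraMap F E)) p.rep = 0 ∧
        qeval (M0.map (algebraMap F E)) p.rep = 0} ∩ sinf E =
      ptsOf (Submodule.span E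
        {algVec F (spreadV1 c0 c1 t), algVec F (spreadV2 c0 c1 t0 t1 t)}) := by
  ext p
  simp only [Set.mem_inter_iff, Set.mem_ofPred_eq, sinf, ptsOf, mem_span_spread_iff hτ hc hκ,
    and_comm (b := p.rep 4 = 0)]
  refine and_congr_right fun h4 => ?_
  have h4' : algVec E p.rep 4 = (0 : K) := by rw [algVec, h4, map_zero]
  rw [qeval_map_algebraMap_eq_zero_iff (K := K) Minf,
    qeval_map_algebraMap_eq_zero_iff (K := K) M0,
    h.qeval_eq_zero_iff (φ := AlgHom.id F K) (φ' := κ) hκ.symm h4',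
    qeval_map_cons_cons_zero_eq_zero_iff_of_inter_linf_eq_singleton hM,
    qeval_map_cons_cons_zero_eq_zero_iff_of_inter_linf_eq_singleton hM]
  rfl

theorem IsBBDecomposition.inter_sinf_eq_empty (h : IsBBDecomposition τ M Minf M0) (hκ : κ τ ≠ τ)
    (hκκ : ∀ x, κ (κ x) = x) (hM : {p : PP K 3 | qeval M p.rep = 0} ∩ linf K = ∅) :
    {p : PP E 5 | qeval (Minf.map (algebraMap F E)) p.rep = 0 ∧
        qeval (M0.map (algebraMap F E)) p.rep = 0} ∩ sinf E = ∅ := by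
  refine Set.eq_empty_of_forall_notMem fun p ⟨⟨hinf, h0⟩, h4⟩ => p.rep_nonzero ?_
  replace h4 : p.rep 4 = 0 := h4
  have h4' : algVec E p.rep 4 = (0 : K) := by rw [algVec, h4, map_zero]
  rw [qeval_map_algebraMap_eq_zero_iff (K := K)] at hinf h0
  obtain ⟨hid, hconj⟩ := (h.qeval_eq_zero_iff (φ := AlgHom.id F K) (φ' := κ) hκ.symm h4').mp
    ⟨hinf, h0⟩
  obtain ⟨hX, hY⟩ := eq_zero_of_inter_linf_eq_empty hM hid
  have hconj' := congrArg κ hconj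
  rw [map_qeval_cons_cons_zero, map_zero, Matrix.map_map, show κ ∘ κ = id from funext hκκ,
    Matrix.map_id] at hconj'
  obtain ⟨hX', hY'⟩ := eq_zero_of_inter_linf_eq_empty hM hconj'
  rw [map_eq_zero, mul_comm] at hX' hY'
  rw [AlgHom.id_apply, mul_comm] at hX hY
  obtain ⟨hv0, hv1⟩ := (eq_zero_and_eq_zero_iff_add_mul_eq_zero hκ.symm).mpr ⟨hX, hX'⟩
  obtain ⟨hv2, hv3⟩ := (eq_zero_and_eq_zero_iff_add_mul_eq_zero hκ.symm).mpr ⟨hY, hY'⟩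
  simp only [algVec, map_eq_zero] at hv0 hv1 hv2 hv3
  ext i
  fin_cases i <;> assumption

end SpreadLines

section TransversalLines

variable {F K L : Type} [Field F] [Field K] [Field L] [Algebra F L] {σ : L →ₐ[F] L}
  {M : Matrix (Fin 3) (Fin 3) K}

/-- The vector `αA₀ + A₁` of the transversal point with parameter `α`, where `s` stands for the
conjugate `τ^q` of `τ`. -/
def transversalVec (α s : L) : Fin 5 → L := ![α * s, -α, s, -1, 0]

/-- The line joining the `k`-th and `(k+1)`-st conjugates of the point `[v]`, for conjugation by
`σ`; over a finite field, with `σ` the Frobenius map and `v = αA₀ + A₁`, it is `ℓ_P^{q^k}`. -/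
def conjLine (σ : L →ₐ[F] L) (v : Fin 5 → L) (k : ℕ) : Set (PP L 5) :=
  ptsOf (Submodule.span L {(mapVec (σ : L →+* L))^[k] v, (mapVec (σ : L →+* L))^[k + 1] v})

lemma lpLine_eq_conjLine [Fintype F] [Algebra K L] (τ : K) (α : L) (k : ℕ) :
    lpLine τ (Fintype.card F) α k =
      conjLine (FiniteField.frobeniusAlgHom F L)
        (transversalVec α (FiniteField.frobeniusAlgHom F L (algebraMap K L τ))) k := by
  have hvec : pVec τ (Fintype.card F) α =
      transversalVec α (FiniteField.frobeniusAlgHom F L (algebraMap K L τ)) := by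
    ext i
    fin_cases i <;> simp [pVec, transversalVec, mapVec, A0v, A1v]
  rw [lpLine, hvec]
  rfl

lemma mapVec_transversalVec (α s : L) :
    mapVec (σ : L →+* L) (transversalVec α s) = transversalVec (σ α) (σ s) := by
  ext i
  fin_cases i <;> simp [mapVec, transversalVec]

lemma mem_span_transversalVec_iff {s s' : L} (hs : s ≠ s') (α β : L) (v : Fin 5 → L) :
    v ∈ Submodule.span L {transversalVec α s', transversalVec β s} ↔
      v 4 = 0 ∧ v 0 + v 1 * s = α * (v 2 + v 3 * s) ∧
        v 0 + v 1 * s' = β * (v 2 + v 3 * s') := by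
  rw [Submodule.mem_span_pair]
  constructor
  · rintro ⟨a, b, rfl⟩
    simp only [transversalVec, Pi.add_apply, Pi.smul_apply, smul_eq_mul, Matrix.cons_val]
    exact ⟨by ring, by ring, by ring⟩
  · rintro ⟨h4, h, h'⟩
    set a := (v 2 + v 3 * s) / (s' - s) with ha
    set b := -(v 2 + v 3 * s') / (s' - s) with hb
    have hd : s' - s ≠ 0 := sub_ne_zero.mpr hs.symm
    rw [eq_div_iff hd] at ha hb
    have hv0 : a * (α * s') + b * (β * s) = v 0 :=
      mul_right_cancel₀ hd (by linear_combination α * s' * ha + β * s * hb - s' * h + s * h')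
    have hv1 : -(a * α) + -(b * β) = v 1 :=
      mul_right_cancel₀ hd (by linear_combination -α * ha - β * hb + h - h')
    have hv2 : a * s' + b * s = v 2 :=
      mul_right_cancel₀ hd (by linear_combination s' * ha + s * hb)
    have hv3 : -a + -b = v 3 := mul_right_cancel₀ hd (by linear_combination -ha - hb)
    refine ⟨a, b, funext fun i => ?_⟩
    fin_cases i <;> simp [transversalVec, hv0, hv1, hv2, hv3, h4]

lemma qeval_map_comp_cons_one_zero [Algebra F K] (φ : K →ₐ[F] L) {α : L}
    (hα : qeval (M.map φ) ![α, 1, 0] = 0) :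
    qeval (M.map (σ.comp φ)) ![σ α, 1, 0] = 0 := by
  have hσα := congrArg σ hα
  rwa [map_qeval_cons_cons_zero, map_one, map_zero] at hσα

end TransversalLines

section ExteriorConics

variable {F K L : Type} [Field F] [Field K] [Field L] [Algebra F K] [Algebra K L] [Algebra F L]
  [IsScalarTower F K L] {τ : K} {σ : L →ₐ[F] L} {M : Matrix (Fin 3) (Fin 3) K}
  {Minf M0 : Matrix (Fin 5) (Fin 5) F}

lemma map_map_ne_self_of_inter_linf_eq_empty (hσ : ∀ x, σ x = x → x ∈ Set.range (algebraMap F L))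
    (hne : σ (algebraMap K L τ) ≠ algebraMap K L τ)
    (hττ : σ (σ (algebraMap K L τ)) = algebraMap K L τ)
    (hM : {p : PP K 3 | qeval M p.rep = 0} ∩ linf K = ∅) {α : L}
    (hα : qeval (M.map (algebraMap K L)) ![α, 1, 0] = 0) : σ (σ α) ≠ α := by
  intro hfix
  obtain ⟨a, rfl⟩ := mem_range_algebraMap_of_map_map_eq hσ hne hττ hfix
  rw [← map_one (algebraMap K L), ← map_qeval_cons_cons_zero, map_eq_zero] at hα
  exact one_ne_zero (eq_zero_of_inter_linf_eq_empty hM hα).2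

theorem IsBBDecomposition.inter_sinf_eq_union_conjLine (h : IsBBDecomposition τ M Minf M0)
    (hσ : ∀ x, σ x = x → x ∈ Set.range (algebraMap F L))
    (hne : σ (algebraMap K L τ) ≠ algebraMap K L τ)
    (hσσ : ∀ x : K, σ (σ (algebraMap K L x)) = algebraMap K L x)
    (hM : {p : PP K 3 | qeval M p.rep = 0} ∩ linf K = ∅) {α : L}
    (hα : qeval (M.map (algebraMap K L)) ![α, 1, 0] = 0) :
    {p : PP L 5 | qeval (Minf.map (algebraMap F L)) p.rep = 0 ∧
        qeval (M0.map (algebraMap F L)) p.rep = 0} ∩ sinf L =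
      conjLine σ (transversalVec α (σ (algebraMap K L τ))) 0 ∪
      conjLine σ (transversalVec α (σ (algebraMap K L τ))) 1 ∪
      conjLine σ (transversalVec α (σ (algebraMap K L τ))) 2 ∪
      conjLine σ (transversalVec α (σ (algebraMap K L τ))) 3 := by
  let ι : K →ₐ[F] L := IsScalarTower.toAlgHom F K L
  have hσσι : σ.comp (σ.comp ι) = ι := AlgHom.ext hσσ
  have h00 (φ : K →ₐ[F] L) : M.map φ 0 0 ≠ 0 :=
    (map_ne_zero φ).mpr (apply_zero_zero_ne_zero_of_inter_linf_eq_empty hM)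
  have hα0 : qeval (M.map ι) ![α, 1, 0] = 0 := hα
  have hα1 := qeval_map_comp_cons_one_zero (σ := σ) ι hα0
  have hα2 := qeval_map_comp_cons_one_zero (σ := σ) _ hα1
  have hα3 := qeval_map_comp_cons_one_zero (σ := σ) _ hα2
  have hα4 := qeval_map_comp_cons_one_zero (σ := σ) _ hα3
  rw [hσσι] at hα2 hα3 hα4
  have hne02 : α ≠ σ (σ α) := (map_map_ne_self_of_inter_linf_eq_empty hσ hne (hσσ τ) hM hα).symm
  have hne13 : σ α ≠ σ (σ (σ α)) := σ.toRingHom.injective.ne hne02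
  have hσ4 : σ (σ (σ (σ α))) = α := by
    have hroot := (qeval_cons_cons_zero_eq_zero_iff (h00 ι) hne02 hα0 hα2 _ 1).mp (hσσι ▸ hα4)
    rw [mul_one, mul_one] at hroot
    exact hroot.resolve_right fun h4 =>
      hne02 (σ.toRingHom.injective (σ.toRingHom.injective h4)).symm
  ext p
  simp only [Set.mem_inter_iff, Set.mem_union, Set.mem_ofPred_eq, sinf, conjLine, ptsOf,
    Function.iterate_succ, Function.iterate_zero, Function.comp_apply, id_eq,
    mapVec_transversalVec, hσσ, hσ4]
  rw [Set.pair_comm (transversalVec (σ α) _), Set.pair_comm (transversalVec (σ (σ (σ α))) _)]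
  simp only [mem_span_transversalVec_iff hne.symm]
  by_cases h4 : p.rep 4 = 0
  · rw [h.qeval_eq_zero_iff (φ := ι) (φ' := σ.comp ι) hne.symm h4,
      qeval_cons_cons_zero_eq_zero_iff (h00 _) hne02 hα0 hα2,
      qeval_cons_cons_zero_eq_zero_iff (h00 _) hne13 hα1 hα3]
    simp only [h4, ι, AlgHom.comp_apply, IsScalarTower.coe_toAlgHom']
    tauto
  · simp only [h4, and_false, false_and, or_false]

end ExteriorConics

theorem statement_10_general {F K L : Type} [Field F] [Field K] [Field L] [Algebra F K]
    [Algebra K L] [Algebra F L] [IsScalarTower F K L] (τ : K) (t0 t1 : F)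
    (hτ : τ ^ 2 = algebraMap F K t1 * τ + algebraMap F K t0)
    (hτF : τ ∉ Set.range (algebraMap F K)) (c0 c1 : K → F)
    (hc : ∀ x : K, x = algebraMap F K (c0 x) + algebraMap F K (c1 x) * τ) (σ : L →ₐ[F] L)
    (hσ : ∀ x, σ x = x → x ∈ Set.range (algebraMap F L)) (M : Matrix (Fin 3) (Fin 3) K)
    (Minf M0 : Matrix (Fin 5) (Fin 5) F) (hdec : IsBBDecomposition τ M Minf M0) :
    (∀ tP : Option K, {p : PP K 3 | qeval M p.rep = 0} ∩ linf K = {ptInf tP} →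
      {p : PP F 5 | qeval Minf p.rep = 0 ∧ qeval M0 p.rep = 0} ∩ sinf F
          = spreadLine c0 c1 t0 t1 tP ∧
      {p : PP K 5 | qeval (Minf.map (algebraMap F K)) p.rep = 0 ∧
          qeval (M0.map (algebraMap F K)) p.rep = 0} ∩ sinf K
          = extSpreadLine F c0 c1 t0 t1 tP) ∧
    ({p : PP K 3 | qeval M p.rep = 0} ∩ linf K = ∅ →
      {p : PP F 5 | qeval Minf p.rep = 0 ∧ qeval M0 p.rep = 0} ∩ sinf F = ∅ ∧
      {p : PP K 5 | qeval (Minf.map (algebraMap F K)) p.rep = 0 ∧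
          qeval (M0.map (algebraMap F K)) p.rep = 0} ∩ sinf K = ∅ ∧
      ∀ α : L, qeval (M.map (algebraMap K L)) ![α, 1, 0] = 0 →
        {p : PP L 5 | qeval (Minf.map (algebraMap F L)) p.rep = 0 ∧
            qeval (M0.map (algebraMap F L)) p.rep = 0} ∩ sinf L =
          conjLine σ (transversalVec α (σ (algebraMap K L τ))) 0 ∪
          conjLine σ (transversalVec α (σ (algebraMap K L τ))) 1 ∪
          conjLine σ (transversalVec α (σ (algebraMap K L τ))) 2 ∪
          conjLine σ (transversalVec α (σ (algebraMap K L τ))) 3) := by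
  have hne := map_algebraMap_ne_self hσ hτF
  have hspan (x : K) : ∃ a b : F, x = algebraMap F K a + algebraMap F K b * τ := ⟨_, _, hc x⟩
  have hσσ := map_map_algebraMap hτ hne hspan
  obtain ⟨κ, hκ⟩ := exists_algHom_algebraMap_eq hτ hne hspan
  have hκτ : κ τ ≠ τ := fun hfix => hne (by rw [← hκ, hfix])
  have hκκ (x : K) : κ (κ x) = x := (algebraMap K L).injective (by rw [hκ, hκ, hσσ])
  exact ⟨fun tP hM => ⟨hdec.inter_sinf_eq_ptsOf (E := F) hτ hc hκτ hM,
      hdec.inter_sinf_eq_ptsOf (E := K) hτ hc hκτ hM⟩,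
    fun hM => ⟨hdec.inter_sinf_eq_empty (E := F) hκτ hκκ hM,
      hdec.inter_sinf_eq_empty (E := K) hκτ hκκ hM,
      fun α hα => hdec.inter_sinf_eq_union_conjLine hσ hne hσσ hM hα⟩⟩

/-- (i) For a conic `𝒪` tangent to `ℓ∞` at `P̄`, `[𝒪]` meets infinity exactly in `[P]`
(also over `GF(q²)`). (ii) For a conic exterior to `ℓ∞`, `[𝒪]` meets infinity in nothing
over `GF(q)` and `GF(q²)`, while over `GF(q⁴)` it meets `z = 0` exactly in the four
conjugate lines `ℓ_P, ℓ_P^q, ℓ_P^{q²}, ℓ_P^{q³}`. -/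
theorem statement_10
    {F K : Type} [Field F] [Field K] [Fintype F] [Fintype K] [Algebra F K]
    (q : ℕ) (hq : Fintype.card F = q) (hK : Fintype.card K = q ^ 2)
    (τ : K) (t0 t1 : F)
    (hτ : τ ^ 2 = algebraMap F K t1 * τ + algebraMap F K t0)
    (hτF : τ ∉ Set.range (algebraMap F K))
    (c0 c1 : K → F)
    (hc : ∀ x : K, x = algebraMap F K (c0 x) + algebraMap F K (c1 x) * τ)
    {L : Type} [Field L] [Fintype L] [Algebra K L] [Algebra F L] [IsScalarTower F K L]
    (hL : Fintype.card L = q ^ 4)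
    (M : Matrix (Fin 3) (Fin 3) K)
    (hO : IsFq2Conic {p : PP K 3 | qeval M p.rep = 0})
    (Minf M0 : Matrix (Fin 5) (Fin 5) F)
    (hdec : ∀ v : Fin 5 → F, qeval M (bbSubst F τ v) =
      algebraMap F K (qeval Minf v) + algebraMap F K (qeval M0 v) * τ) :
    (∀ tP : Option K, {p : PP K 3 | qeval M p.rep = 0} ∩ linf K = {ptInf tP} →
      {p : PP F 5 | qeval Minf p.rep = 0 ∧ qeval M0 p.rep = 0} ∩ sinf F
          = spreadLine c0 c1 t0 t1 tP ∧
      {p : PP K 5 | qeval (Minf.map (algebraMap F K)) p.rep = 0 ∧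
          qeval (M0.map (algebraMap F K)) p.rep = 0} ∩ sinf K
          = extSpreadLine F c0 c1 t0 t1 tP) ∧
    ({p : PP K 3 | qeval M p.rep = 0} ∩ linf K = ∅ →
      {p : PP F 5 | qeval Minf p.rep = 0 ∧ qeval M0 p.rep = 0} ∩ sinf F = ∅ ∧
      {p : PP K 5 | qeval (Minf.map (algebraMap F K)) p.rep = 0 ∧
          qeval (M0.map (algebraMap F K)) p.rep = 0} ∩ sinf K = ∅ ∧
      ∀ α : L, qeval (M.map (algebraMap K L)) ![α, 1, 0] = 0 →
        {p : PP L 5 | qeval (Minf.map (algebraMap F L)) p.rep = 0 ∧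
            qeval (M0.map (algebraMap F L)) p.rep = 0} ∩ sinf L
          = lpLine τ q α 0 ∪ lpLine τ q α 1 ∪ lpLine τ q α 2 ∪ lpLine τ q α 3) := by
  subst hq
  simpa only [lpLine_eq_conjLine] using statement_10_general τ t0 t1 hτ hτF c0 c1 hc
    (FiniteField.frobeniusAlgHom F L) (fun _ => mem_range_algebraMap_of_pow_card_eq) M Minf M0 hdec

end BaerConics
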